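/- Fix α = 0.981, an integer d ≥ 2, and integers w_1,…,w_d ≥ 1. Suppose i ≠ j are indices with w_i = w_j and w_i ≤ 2. For t ∈ (0,1/2]^d, define t' by t'_k = t_k for k ∉ {i,j} and t'_i = t'_j = 2^{w_i−1}·(1 − √(ĥ(t_i,w_i)·ĥ(t_j,w_j))). Then κ_d^{(w_1,…,w_d)}(t) ≤ κ_d^{(w_1,…,w_d)}(t'). -/

import Mathlib

open Finset

/-- `α^{-⌈log_4 (w+1)⌉}` with `α = 0.981`; for `w ≥ 1`, `⌈log_4 (w+1)⌉ = Nat.clog 4 (w+1)`. -/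
noncomputable def amort (w : ℕ) : ℝ := (0.981 : ℝ) ^ (-(Nat.clog 4 (w + 1) : ℤ))

/-- `T(t,w) = (t/2^{w−1})/(1 − t/2^{w−1}) · ((1−t)/√t + (w−1)/√2)`. -/
noncomputable def Tfun (t : ℝ) (w : ℕ) : ℝ :=
  (t / 2 ^ (w - 1)) / (1 - t / 2 ^ (w - 1)) * ((1 - t) / Real.sqrt t + ((w : ℝ) - 1) / Real.sqrt 2)

/-- `g(h) = √(h/(1+h))`. -/
noncomputable def gfun (h : ℝ) : ℝ := Real.sqrt (h / (1 + h))

/-- `ĥ(t,w) = 1 − t/2^{w−1}`. -/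
noncomputable def hhat (t : ℝ) (w : ℕ) : ℝ := 1 - t / 2 ^ (w - 1)

/-- The single-layer decay rate
`κ_d^{(w_1,…,w_d)}(t) = g(∏_j ĥ(t_j,w_j)) · Σ_a T(t_a,w_a) · α^{−⌈log_4(w_a+1)⌉}`. -/
noncomputable def kap (d : ℕ) (w : Fin d → ℕ) (t : Fin d → ℝ) : ℝ :=
  gfun (∏ j, hhat (t j) (w j)) * ∑ a, Tfun (t a) (w a) * amort (w a)

/-- If `f` and `g` agree off `{i, j}` then their products agree as soon as `f i * f j = g i * g j`. -/
lemma prod_eq_of_pair {ι M : Type*} [Fintype ι] [DecidableEq ι] [CommMonoid M] {i j : ι}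
    (hij : i ≠ j) {f g : ι → M} (hoff : ∀ k, k ≠ i → k ≠ j → f k = g k)
    (hpair : f i * f j = g i * g j) : ∏ k, f k = ∏ k, g k := by
  rw [← prod_sdiff (subset_univ {i, j}), ← prod_sdiff (subset_univ {i, j}),
    prod_pair hij, prod_pair hij, hpair]
  congr 1
  refine prod_congr rfl fun k hk => ?_
  simp only [mem_sdiff, mem_univ, mem_insert, mem_singleton, true_and, not_or] at hk
  exact hoff k hk.1 hk.2

/-- If `f` and `g` agree off `{i, j}` then their sums compare like `f i + f j` and `g i + g j`. -/
lemma sum_le_of_pair {ι : Type*} [Fintype ι] [DecidableEq ι] {i j : ι}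
    (hij : i ≠ j) {f g : ι → ℝ} (hoff : ∀ k, k ≠ i → k ≠ j → f k = g k)
    (hpair : f i + f j ≤ g i + g j) : ∑ k, f k ≤ ∑ k, g k := by
  rw [← sum_sdiff (subset_univ {i, j}), ← sum_sdiff (f := g) (subset_univ {i, j}),
    sum_pair hij, sum_pair hij]
  refine add_le_add (le_of_eq (sum_congr rfl fun k hk => ?_)) hpair
  simp only [mem_sdiff, mem_univ, mem_insert, mem_singleton, true_and, not_or] at hk
  exact hoff k hk.1 hk.2

lemma sqrt_mul_le_half_add {x y : ℝ} (hx : 0 ≤ x) (hy : 0 ≤ y) : √(x * y) ≤ (x + y) / 2 := by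
  rw [Real.sqrt_le_left (by positivity)]
  nlinarith [sq_nonneg (x - y)]

lemma Tfun_one {t : ℝ} (ht : 0 < t) (ht1 : t < 1) : Tfun t 1 = √t := by
  have h1 : 1 - t ≠ 0 := by linarith
  have h2 : √t ≠ 0 := (Real.sqrt_pos.2 ht).ne'
  simp only [Tfun, Nat.sub_self, pow_zero, div_one, Nat.cast_one, sub_self, zero_div,
    add_zero]
  field_simp
  rw [Real.sq_sqrt ht.le]

lemma Tfun_two {u : ℝ} (hu : 0 < u) (hu1 : u < 1) :
    Tfun (2 * u ^ 2) 2 = (2 * u - 1 + 1 / (1 + u)) / √2 := by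
  have h1 : 1 - u ^ 2 ≠ 0 := by nlinarith
  have h2 : √2 ≠ 0 := by positivity
  have h3 : √(2 * u ^ 2) = √2 * u := by
    rw [Real.sqrt_mul (by norm_num), Real.sqrt_sq hu.le]
  have h4 : 1 + u ≠ 0 := by positivity
  have h5 : 2 * u ^ 2 / 2 ^ (2 - 1) = u ^ 2 := by norm_num
  rw [Tfun, h3, h5]
  field_simp
  push_cast
  ring

/-- The tangent inequality at `c` of `u ↦ 2u - 1 + 1/(1+u)`, which is concave in `u²`. -/
lemma le_tangent_sq {u c : ℝ} (hu : 0 < u) (hc : 0 < c) :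
    2 * u - 1 + 1 / (1 + u) ≤ 2 * c - 1 + 1 / (1 + c)
      + (2 - 1 / (1 + c) ^ 2) / (2 * c) * (u ^ 2 - c ^ 2) := by
  have key : 2 * c - 1 + 1 / (1 + c) + (2 - 1 / (1 + c) ^ 2) / (2 * c) * (u ^ 2 - c ^ 2)
      - (2 * u - 1 + 1 / (1 + u))
      = (u - c) ^ 2 * ((2 * (1 + c) ^ 2 - 1) * (1 + u) - 2 * c)
        / (2 * c * (1 + u) * (1 + c) ^ 2) := by
    field_simp
    ring
  have hnum : 0 ≤ (2 * (1 + c) ^ 2 - 1) * (1 + u) - 2 * c := by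
    have : 0 < c * u := mul_pos hc hu
    have : 0 < c ^ 2 * u := by positivity
    nlinarith [sq_nonneg c]
  have : 0 ≤ (u - c) ^ 2 * ((2 * (1 + c) ^ 2 - 1) * (1 + u) - 2 * c)
        / (2 * c * (1 + u) * (1 + c) ^ 2) := by positivity
  linarith

lemma add_le_two_mul_of_sq {a b c : ℝ} (ha : 0 < a) (hb : 0 < b) (hc : 0 < c)
    (h : a ^ 2 + b ^ 2 ≤ 2 * c ^ 2) :
    (2 * a - 1 + 1 / (1 + a)) + (2 * b - 1 + 1 / (1 + b)) ≤ 2 * (2 * c - 1 + 1 / (1 + c)) := by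
  have hslope : 0 ≤ (2 - 1 / (1 + c) ^ 2) / (2 * c) := by
    have : 1 / (1 + c) ^ 2 ≤ 1 := by
      rw [div_le_one (by positivity)]
      nlinarith
    exact div_nonneg (by linarith) (by linarith)
  nlinarith [le_tangent_sq ha hc, le_tangent_sq hb hc,
    mul_nonneg hslope (sub_nonneg.2 h)]

lemma Tfun_two_eq {t : ℝ} (ht : 0 < t) (ht1 : t < 2) :
    Tfun t 2 = (2 * √(t / 2) - 1 + 1 / (1 + √(t / 2))) / √2 := by
  rw [← Tfun_two (Real.sqrt_pos.2 (by linarith)), Real.sq_sqrt (by linarith)]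
  · congr 1
    ring
  · rw [Real.sqrt_lt' one_pos]
    linarith

/-- Replacing two arguments by the one whose `ĥ` is the geometric mean does not decrease the
sum of the `T`. -/
lemma Tfun_add_le {w : ℕ} (hw : 1 ≤ w) (hw2 : w ≤ 2) {x y : ℝ}
    (hx : x ∈ Set.Ioc (0 : ℝ) (1 / 2)) (hy : y ∈ Set.Ioc (0 : ℝ) (1 / 2)) :
    Tfun x w + Tfun y w ≤ 2 * Tfun (2 ^ (w - 1) * (1 - √(hhat x w * hhat y w))) w := by
  obtain ⟨hx0, hx1⟩ := hx
  obtain ⟨hy0, hy1⟩ := hy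
  interval_cases w
  · simp only [hhat, Nat.sub_self, pow_zero, div_one, one_mul]
    have hle := sqrt_mul_le_half_add (x := 1 - x) (y := 1 - y) (by linarith) (by linarith)
    have hpos : 0 < √((1 - x) * (1 - y)) :=
      Real.sqrt_pos.2 (mul_pos (by linarith) (by linarith))
    rw [Tfun_one hx0 (by linarith), Tfun_one hy0 (by linarith),
      Tfun_one (by linarith) (by linarith)]
    set s := √((1 - x) * (1 - y))
    refine (abs_le_of_sq_le_sq' ?_ (by positivity)).2
    nlinarith [Real.sq_sqrt hx0.le, Real.sq_sqrt hy0.le, sq_nonneg (√x - √y),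
      Real.sq_sqrt (show 0 ≤ 1 - s by linarith)]
  · simp only [hhat, Nat.add_one_sub_one, pow_one]
    have hle := sqrt_mul_le_half_add (x := 1 - x / 2) (y := 1 - y / 2) (by linarith) (by linarith)
    have hpos : 0 < √((1 - x / 2) * (1 - y / 2)) :=
      Real.sqrt_pos.2 (mul_pos (by linarith) (by linarith))
    rw [Tfun_two_eq hx0 (by linarith), Tfun_two_eq hy0 (by linarith),
      Tfun_two_eq (by linarith) (by linarith), ← add_div, mul_div_assoc']
    refine div_le_div_of_nonneg_right (add_le_two_mul_of_sq ?_ ?_ ?_ ?_) (by positivity)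
    · exact Real.sqrt_pos.2 (by linarith)
    · exact Real.sqrt_pos.2 (by linarith)
    · exact Real.sqrt_pos.2 (by linarith)
    · rw [Real.sq_sqrt (by linarith), Real.sq_sqrt (by linarith), Real.sq_sqrt (by linarith)]
      linarith

lemma hhat_nonneg {t : ℝ} (ht : t ∈ Set.Ioc (0 : ℝ) (1 / 2)) (w : ℕ) : 0 ≤ hhat t w := by
  have : t / 2 ^ (w - 1) ≤ t := div_le_self ht.1.le (one_le_pow₀ (by norm_num))
  unfold hhat
  linarith [ht.2]

lemma hhat_two_pow_mul_one_sub (s : ℝ) (w : ℕ) : hhat (2 ^ (w - 1) * (1 - s)) w = s := by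
  rw [hhat, mul_div_cancel_left₀ _ (by positivity)]
  ring

/-- merging two coordinates `i ≠ j` with equal weights `w_i = w_j ≤ 2` into the
common value `2^{w_i−1}·(1 − √(ĥ(t_i,w_i)·ĥ(t_j,w_j)))` does not decrease `κ`. -/
theorem stmt16 (d : ℕ) (hd : 2 ≤ d) (w : Fin d → ℕ) (hw : ∀ k, 1 ≤ w k)
    (i j : Fin d) (hij : i ≠ j) (hwij : w i = w j) (hwi : w i ≤ 2)
    (t : Fin d → ℝ) (ht : ∀ k, t k ∈ Set.Ioc (0 : ℝ) (1 / 2)) :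
    kap d w t ≤ kap d w (fun k => if k = i ∨ k = j then
      2 ^ (w i - 1) * (1 - Real.sqrt (hhat (t i) (w i) * hhat (t j) (w j))) else t k) := by
  have hprod : ∏ k, hhat (t k) (w k) = ∏ k, hhat (if k = i ∨ k = j then
      2 ^ (w i - 1) * (1 - √(hhat (t i) (w i) * hhat (t j) (w j))) else t k) (w k) := by
    refine prod_eq_of_pair hij (fun k hki hkj => by simp [hki, hkj]) ?_
    simp only [true_or, or_true, if_true]
    rw [← hwij, hhat_two_pow_mul_one_sub,
      Real.mul_self_sqrt (mul_nonneg (hhat_nonneg (ht i) _) (hhat_nonneg (ht j) _))]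
  unfold kap
  rw [← hprod]
  refine mul_le_mul_of_nonneg_left ?_ (Real.sqrt_nonneg _)
  refine sum_le_of_pair hij (fun k hki hkj => by simp [hki, hkj]) ?_
  simp only [true_or, or_true, if_true]
  rw [← hwij, ← add_mul, ← add_mul, ← two_mul]
  have hamort : 0 ≤ amort (w i) := by
    unfold amort
    positivity
  exact mul_le_mul_of_nonneg_right (Tfun_add_le (hw i) hwi (ht i) (ht j)) hamort
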